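/- Let f be a strictly convex standard self-concordant function on ℝⁿ, x a point with eigenvalues σ_1 ≥ … ≥ σ_n > 0 of ∇²f(x), and let ε ∈ (0, 1] satisfy ε ≤ σ_n/σ_{N+1}. Set η := (3 − √(9 − 4ε))/2. Then η ∈ (0, (3 − √5)/2], and if 0 < λ(x) < η then the unit step with the truncated direction d̂ := −Q⁻¹ ∇f(x) (Q the truncated approximation of ∇²f(x) with parameter N) yields λ(x + d̂) < λ(x). -/

import Mathlib

open Matrix

/-!
A symmetric trilinear form that is bounded on the diagonal by the cube of a Euclidean norm obeys
the same bound with two arguments equal: restrict it to a plane and trisect the angle between the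
arguments. Hence self-concordance bounds `D³f[u, v, v]`, and comparison with `dy/dt = y²` shows that
a step of local norm `r < 1` changes local norms by a factor at most `(1 - r)⁻¹`, while the linear
model of the gradient errs by at most `r² / (1 - r)` in the dual norm.

If `εQ ≤ ∇²f(x) ≤ Q` in the Loewner order, then `d = -Q⁻¹∇f(x)` has local norm `r ≤ λ` and leaves
a residual `∇f(x) + ∇²f(x)d` of dual norm at most `(1 - ε)λ`. The new decrement is therefore at most
`((1 - ε)λ + λ² / (1 - λ)) / (1 - λ)`, which is smaller than `λ` to the left of the smaller root of
`λ² - 3λ + ε`.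
-/

section CubicForms

lemma abs_mul_cos_add_mul_sin_le_of_abs_cubic_le {a b c d C : ℝ}
    (h : ∀ x y : ℝ, x ^ 2 + y ^ 2 = 1 →
      |a * x ^ 3 + 3 * b * x ^ 2 * y + 3 * c * x * y ^ 2 + d * y ^ 3| ≤ C) (α : ℝ) :
    |a * Real.cos α + b * Real.sin α| ≤ C := by
  set x := Real.cos (α / 3)
  set y := Real.sin (α / 3)
  set p : ℝ → ℝ → ℝ := fun x y =>
    a * x ^ 3 + 3 * b * x ^ 2 * y + 3 * c * x * y ^ 2 + d * y ^ 3
  have hxy : x ^ 2 + y ^ 2 = 1 := Real.cos_sq_add_sin_sq _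
  have hcos : Real.cos α = 4 * x ^ 3 - 3 * x := by
    rw [← Real.cos_three_mul, mul_div_cancel₀ α three_ne_zero]
  have hsin : Real.sin α = 3 * y - 4 * y ^ 3 := by
    rw [← Real.sin_three_mul, mul_div_cancel₀ α three_ne_zero]
  have h3 : √3 ^ 2 = 3 := Real.sq_sqrt (by norm_num)
  set s := √(3 : ℝ)
  -- The nodes are the solutions `θ` of `3θ ≡ α` modulo `2π`; the weight of a node is the Fejér
  -- kernel `(sin (3φ / 2) / (3 * sin (φ / 2)))²` at `φ = α - θ`.
  have hquad : a * Real.cos α + b * Real.sin α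
      = (4 * x ^ 2 - 1) ^ 2 / 9 * p x y
        + 4 * y ^ 2 * (y + s * x) ^ 2 / 9 * p (-x / 2 - s * y / 2) (-y / 2 + s * x / 2)
        + 4 * y ^ 2 * (y - s * x) ^ 2 / 9 * p (-x / 2 + s * y / 2) (-y / 2 - s * x / 2) := by
    rw [hcos, hsin]
    simp only [p]
    grind
  have hw : (4 * x ^ 2 - 1) ^ 2 / 9 + 4 * y ^ 2 * (y + s * x) ^ 2 / 9
      + 4 * y ^ 2 * (y - s * x) ^ 2 / 9 = 1 := by grind
  have hp₀ := h x y hxy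
  have hp₁ := h (-x / 2 - s * y / 2) (-y / 2 + s * x / 2) (by grind)
  have hp₂ := h (-x / 2 + s * y / 2) (-y / 2 - s * x / 2) (by grind)
  rw [hquad]
  set w₀ := (4 * x ^ 2 - 1) ^ 2 / 9
  set w₁ := 4 * y ^ 2 * (y + s * x) ^ 2 / 9
  set w₂ := 4 * y ^ 2 * (y - s * x) ^ 2 / 9
  calc _ ≤ w₀ * |p x y| + w₁ * |p (-x / 2 - s * y / 2) (-y / 2 + s * x / 2)|
          + w₂ * |p (-x / 2 + s * y / 2) (-y / 2 - s * x / 2)| := by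
        grw [abs_add_three, abs_mul, abs_mul, abs_mul, abs_of_nonneg (by positivity : 0 ≤ w₀),
          abs_of_nonneg (by positivity : 0 ≤ w₁), abs_of_nonneg (by positivity : 0 ≤ w₂)]
    _ ≤ w₀ * C + w₁ * C + w₂ * C := by gcongr
    _ = C := by rw [← add_mul, ← add_mul, hw, one_mul]

variable {E : Type*} [NormedAddCommGroup E] [NormedSpace ℝ E]
  {P : E →L[ℝ] E →L[ℝ] ℝ} {A : E →L[ℝ] E →L[ℝ] E →L[ℝ] ℝ} {c : ℝ}

lemma apply_smul_add_smul_self (hPs : ∀ u v, P u v = P v u) (e g : E) (x y : ℝ) :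
    P (x • e + y • g) (x • e + y • g) = x ^ 2 * P e e + 2 * x * y * P e g + y ^ 2 * P g g := by
  simp only [map_add, map_smul, _root_.add_apply, _root_.smul_apply, smul_eq_mul, hPs g e]
  ring

lemma exists_eq_smul_add_smul_of_apply_self_eq_one (hPs : ∀ u v, P u v = P v u)
    (hP : ∀ v, v ≠ 0 → 0 < P v v) {e : E} (he : P e e = 1) (u : E) :
    ∃ (g : E) (x y : ℝ), u = x • e + y • g ∧ P e g = 0 ∧ P g g ≤ 1 ∧
      P u u = x ^ 2 + y ^ 2 := by
  rcases eq_or_ne u (P e u • e) with hu | hu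
  · refine ⟨0, P e u, 0, by simpa using hu, by simp, by simp, ?_⟩
    nth_rw 1 2 [hu]
    simp only [map_smul, _root_.smul_apply, smul_eq_mul, he]
    ring
  · set w := u - P e u • e
    have hw : 0 < P w w := hP w (sub_ne_zero.2 hu)
    have hew : P e w = 0 := by simp [w, he]
    have hsq : √(P w w) ^ 2 = P w w := Real.sq_sqrt hw.le
    have hu' : u = P e u • e + √(P w w) • ((√(P w w))⁻¹ • w) := by
      rw [smul_inv_smul₀ (Real.sqrt_ne_zero'.2 hw)]
      simp [w]
    have hg : P ((√(P w w))⁻¹ • w) ((√(P w w))⁻¹ • w) = 1 := by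
      simp only [map_smul, _root_.smul_apply, smul_eq_mul]
      field_simp
      exact hsq.symm
    refine ⟨(√(P w w))⁻¹ • w, P e u, √(P w w), hu', by simp [hew], hg.le, ?_⟩
    nth_rw 1 2 [hu']
    rw [apply_smul_add_smul_self hPs, he, hg]
    simp [hew]

lemma abs_trilin_apply_le_of_apply_self_eq_one (hPs : ∀ u v, P u v = P v u)
    (hP : ∀ v, v ≠ 0 → 0 < P v v) (hA₁ : ∀ u v w, A u v w = A v u w)
    (hA₂ : ∀ u v w, A u v w = A u w v) (hA : ∀ v, |A v v v| ≤ c * √(P v v) ^ 3)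
    {e : E} (he : P e e = 1) (u : E) : |A u e e| ≤ c * √(P u u) := by
  obtain ⟨g, x, y, rfl, heg, hgg, hu⟩ := exists_eq_smul_add_smul_of_apply_self_eq_one hPs hP he u
  have hc : 0 ≤ c := (abs_nonneg _).trans (by simpa [he] using hA e)
  have hcubic (x y : ℝ) (hxy : x ^ 2 + y ^ 2 = 1) :
      |A e e e * x ^ 3 + 3 * A g e e * x ^ 2 * y + 3 * A g g e * x * y ^ 2 + A g g g * y ^ 3|
        ≤ c := by
    have hz : √(P (x • e + y • g) (x • e + y • g)) ≤ 1 := by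
      rw [← Real.sqrt_one, Real.sqrt_le_sqrt_iff zero_le_one, apply_smul_add_smul_self hPs, he, heg]
      nlinarith [sq_nonneg y]
    calc _ = |A (x • e + y • g) (x • e + y • g) (x • e + y • g)| := by
          simp only [map_add, map_smul, _root_.add_apply, _root_.smul_apply, smul_eq_mul,
            hA₂ e e g, hA₁ e g, hA₂ g e g]
          ring_nf
      _ ≤ c * √(P (x • e + y • g) (x • e + y • g)) ^ 3 := hA _
      _ ≤ c := mul_le_of_le_one_right hc (pow_le_one₀ (Real.sqrt_nonneg _) hz)
  let z : ℂ := ⟨x, y⟩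
  have hz : √(x ^ 2 + y ^ 2) = ‖z‖ := by rw [Complex.norm_eq_sqrt_sq_add_sq]
  have hpolar : A (x • e + y • g) e e
      = ‖z‖ * (A e e e * Real.cos z.arg + A g e e * Real.sin z.arg) := by
    rw [mul_add, mul_left_comm, mul_left_comm ‖z‖, Complex.norm_mul_cos_arg,
      Complex.norm_mul_sin_arg]
    simp [z, mul_comm]
  rw [hu, hz, hpolar, abs_mul, abs_norm, mul_comm]
  gcongr
  exact abs_mul_cos_add_mul_sin_le_of_abs_cubic_le hcubic z.arg

lemma abs_trilin_apply_le (hPs : ∀ u v, P u v = P v u)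
    (hP : ∀ v, v ≠ 0 → 0 < P v v) (hA₁ : ∀ u v w, A u v w = A v u w)
    (hA₂ : ∀ u v w, A u v w = A u w v) (hA : ∀ v, |A v v v| ≤ c * √(P v v) ^ 3)
    (u v : E) : |A u v v| ≤ c * √(P u u) * P v v := by
  rcases eq_or_ne v 0 with rfl | hv
  · simp
  have hpos := hP v hv
  have hsq := Real.sq_sqrt hpos.le
  set n := √(P v v)
  have hn : 0 < n := Real.sqrt_pos.2 hpos
  have hunit : P (n⁻¹ • v) (n⁻¹ • v) = 1 := by
    simp only [map_smul, _root_.smul_apply, smul_eq_mul, ← hsq]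
    field_simp
  have hv' : |A u v v| = P v v * |A u (n⁻¹ • v) (n⁻¹ • v)| := by
    simp only [map_smul, _root_.smul_apply, smul_eq_mul, abs_mul, abs_of_pos (inv_pos.2 hn), ← hsq]
    field_simp
  rw [hv', mul_comm]
  gcongr
  exact abs_trilin_apply_le_of_apply_self_eq_one hPs hP hA₁ hA₂ hA hunit u

end CubicForms

section LineDerivatives

variable {E F : Type*} [NormedAddCommGroup E] [NormedSpace ℝ E] [NormedAddCommGroup F]
  [NormedSpace ℝ F] {f : E → F}

lemma hasDerivAt_line {x d : E} {t : ℝ} (hf : DifferentiableAt ℝ f (x + t • d)) :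
    HasDerivAt (fun s : ℝ => f (x + s • d)) (fderiv ℝ f (x + t • d) d) t := by
  have h : HasDerivAt (fun s : ℝ => x + s • d) d t := by
    simpa using ((hasDerivAt_id t).smul_const d).const_add x
  exact hf.hasFDerivAt.comp_hasDerivAt t h

lemma hasDerivAt_fderiv_line (hf : ContDiff ℝ 2 f) (x d v : E) (t : ℝ) :
    HasDerivAt (fun s : ℝ => fderiv ℝ f (x + s • d) v)
      (fderiv ℝ (fderiv ℝ f) (x + t • d) d v) t := by
  have h : ContDiff ℝ 1 (fderiv ℝ f) := hf.fderiv_right one_add_one_eq_two.le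
  simpa using (hasDerivAt_line (h.differentiable one_ne_zero _)).clm_apply (hasDerivAt_const t v)

lemma hasDerivAt_fderiv_fderiv_line (hf : ContDiff ℝ 3 f) (x d v w : E) (t : ℝ) :
    HasDerivAt (fun s : ℝ => fderiv ℝ (fderiv ℝ f) (x + s • d) v w)
      (fderiv ℝ (fderiv ℝ (fderiv ℝ f)) (x + t • d) d v w) t := by
  have h : ContDiff ℝ 2 (fderiv ℝ f) := hf.fderiv_right two_add_one_eq_three.le
  simpa using (hasDerivAt_fderiv_line h x d v t).clm_apply (hasDerivAt_const t w)

lemma fderiv_fderiv_comm (hf : ContDiff ℝ 2 f) (x u v : E) :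
    fderiv ℝ (fderiv ℝ f) x u v = fderiv ℝ (fderiv ℝ f) x v u :=
  (hf.contDiffAt.isSymmSndFDerivAt (by simp)).eq u v

lemma fderiv_fderiv_fderiv_comm_left (hf : ContDiff ℝ 3 f) (x u v w : E) :
    fderiv ℝ (fderiv ℝ (fderiv ℝ f)) x u v w = fderiv ℝ (fderiv ℝ (fderiv ℝ f)) x v u w := by
  rw [fderiv_fderiv_comm (hf.fderiv_right two_add_one_eq_three.le)]

lemma fderiv_fderiv_fderiv_comm_right (hf : ContDiff ℝ 3 f) (x u v w : E) :
    fderiv ℝ (fderiv ℝ (fderiv ℝ f)) x u v w = fderiv ℝ (fderiv ℝ (fderiv ℝ f)) x u w v := by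
  have hvw := hasDerivAt_fderiv_fderiv_line hf x u v w 0
  simp only [fderiv_fderiv_comm (hf.of_le (by norm_num)) _ v w] at hvw
  simpa using hvw.unique (hasDerivAt_fderiv_fderiv_line hf x u w v 0)

lemma deriv_line (hf : Differentiable ℝ f) (x v : E) :
    deriv (fun t : ℝ => f (x + t • v)) = fun t => fderiv ℝ f (x + t • v) v :=
  funext fun _ => (hasDerivAt_line (hf _)).deriv

lemma iteratedDeriv_two_line (hf : ContDiff ℝ 2 f) (x v : E) :
    iteratedDeriv 2 (fun t : ℝ => f (x + t • v))
      = fun t => fderiv ℝ (fderiv ℝ f) (x + t • v) v v := by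
  rw [iteratedDeriv_succ, iteratedDeriv_one, deriv_line (hf.differentiable two_ne_zero)]
  exact funext fun t => (hasDerivAt_fderiv_line hf x v v t).deriv

lemma iteratedDeriv_three_line (hf : ContDiff ℝ 3 f) (x v : E) :
    iteratedDeriv 3 (fun t : ℝ => f (x + t • v))
      = fun t => fderiv ℝ (fderiv ℝ (fderiv ℝ f)) (x + t • v) v v v := by
  rw [iteratedDeriv_succ, iteratedDeriv_two_line (hf.of_le (by norm_num))]
  exact funext fun t => (hasDerivAt_fderiv_fderiv_line hf x v v v t).deriv

end LineDerivatives

section ScalarComparison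

variable {φ φ' : ℝ → ℝ} {t : ℝ}

lemma le_div_one_sub_mul_of_deriv_le_sq (hd : ∀ s, HasDerivAt φ (φ' s) s) (hpos : ∀ s, 0 < φ s)
    (hφ : ∀ s, φ' s ≤ φ s ^ 2) (ht₀ : 0 ≤ t) (ht : t * φ 0 < 1) :
    φ t ≤ φ 0 / (1 - t * φ 0) := by
  have hinv (s : ℝ) : HasDerivAt (fun s => (φ s)⁻¹ + s) (-φ' s / φ s ^ 2 + 1) s :=
    ((hd s).inv (hpos s).ne').add (hasDerivAt_id s)
  have hmono : Monotone fun s => (φ s)⁻¹ + s := by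
    refine monotone_of_hasDerivAt_nonneg hinv fun s => ?_
    have := (div_le_one (pow_pos (hpos s) 2)).2 (hφ s)
    simp only [Pi.zero_apply, neg_div]
    linarith
  have hle : (φ 0)⁻¹ + 0 ≤ (φ t)⁻¹ + t := hmono ht₀
  have h0 := hpos 0
  have h1 := hpos t
  rw [le_div_iff₀ (sub_pos.2 ht)]
  field_simp at hle
  linarith

variable {r : ℝ}

lemma one_sub_mul_pos {s : ℝ} (hr : 0 ≤ r) (ht : t * r < 1) (hs : s ≤ t) : 0 < 1 - s * r :=
  sub_pos.2 ((mul_le_mul_of_nonneg_right hs hr).trans_lt ht)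

lemma one_sub_mul_mul_le_of_neg_le_deriv (hd : ∀ s, HasDerivAt φ (φ' s) s)
    (hφ : ∀ s ∈ Set.Icc 0 t, -(r / (1 - s * r) * φ s) ≤ φ' s)
    (hr : 0 ≤ r) (ht₀ : 0 ≤ t) (ht : t * r < 1) : (1 - t * r) * φ 0 ≤ φ t := by
  have hpos : ∀ s ∈ Set.Icc 0 t, 0 < 1 - s * r := fun s hs => one_sub_mul_pos hr ht hs.2
  have hquot : ∀ s ∈ Set.Icc 0 t, HasDerivAt (fun s => φ s / (1 - s * r))
      ((φ' s * (1 - s * r) + φ s * r) / (1 - s * r) ^ 2) s := fun s hs => by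
    refine ((hd s).div (((hasDerivAt_id s).mul_const r).const_sub 1) (hpos s hs).ne').congr_deriv ?_
    simp
  have hmono : MonotoneOn (fun s => φ s / (1 - s * r)) (Set.Icc 0 t) := by
    refine monotoneOn_of_hasDerivWithinAt_nonneg (convex_Icc 0 t)
      (fun s hs => (hquot s hs).continuousAt.continuousWithinAt)
      (fun s hs => (hquot s (interior_subset hs)).hasDerivWithinAt) fun s hs => ?_
    have hp := hpos s (interior_subset hs)
    have h := mul_le_mul_of_nonneg_right (hφ s (interior_subset hs)) hp.le
    have hc : r / (1 - s * r) * φ s * (1 - s * r) = φ s * r := by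
      rw [mul_right_comm, div_mul_cancel₀ _ hp.ne', mul_comm]
    refine div_nonneg ?_ (sq_nonneg _)
    linarith
  have hle : φ 0 / (1 - 0 * r) ≤ φ t / (1 - t * r) :=
    hmono (Set.left_mem_Icc.2 ht₀) (Set.right_mem_Icc.2 ht₀) ht₀
  rwa [zero_mul, sub_zero, div_one, le_div_iff₀ (sub_pos.2 ht), mul_comm] at hle

lemma le_div_one_sub_mul_of_deriv_le (hd : ∀ s, HasDerivAt φ (φ' s) s)
    (hφ : ∀ s ∈ Set.Icc 0 t, φ' s ≤ r / (1 - s * r) * φ s)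
    (hr : 0 ≤ r) (ht₀ : 0 ≤ t) (ht : t * r < 1) : φ t ≤ φ 0 / (1 - t * r) := by
  have hpos : ∀ s ∈ Set.Icc 0 t, 0 < 1 - s * r := fun s hs => one_sub_mul_pos hr ht hs.2
  have hprod (s : ℝ) : HasDerivAt (fun s => φ s * (1 - s * r))
      (φ' s * (1 - s * r) - φ s * r) s := by
    refine ((hd s).mul (((hasDerivAt_id s).mul_const r).const_sub 1)).congr_deriv ?_
    simp [sub_eq_add_neg]
  have hanti : AntitoneOn (fun s => φ s * (1 - s * r)) (Set.Icc 0 t) := by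
    refine antitoneOn_of_hasDerivWithinAt_nonpos (convex_Icc 0 t)
      (fun s _ => (hprod s).continuousAt.continuousWithinAt)
      (fun s _ => (hprod s).hasDerivWithinAt) fun s hs => ?_
    have hp := hpos s (interior_subset hs)
    have h := mul_le_mul_of_nonneg_right (hφ s (interior_subset hs)) hp.le
    have hc : r / (1 - s * r) * φ s * (1 - s * r) = φ s * r := by
      rw [mul_right_comm, div_mul_cancel₀ _ hp.ne', mul_comm]
    linarith
  have hle : φ t * (1 - t * r) ≤ φ 0 * (1 - 0 * r) :=
    hanti (Set.left_mem_Icc.2 ht₀) (Set.right_mem_Icc.2 ht₀) ht₀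
  rwa [zero_mul, sub_zero, mul_one, ← le_div_iff₀ (sub_pos.2 ht)] at hle

end ScalarComparison

section SelfConcordance

lemma rpow_three_halves {a : ℝ} (ha : 0 ≤ a) : a ^ ((3 : ℝ) / 2) = √a ^ 3 := by
  rw [Real.sqrt_eq_rpow, ← Real.rpow_natCast, ← Real.rpow_mul ha]
  norm_num

variable {E : Type*} [NormedAddCommGroup E] [NormedSpace ℝ E]

/-- The local norm `‖v‖ₓ = D²f(x)[v, v]^{1/2}` that the Hessian of `f` at `x` induces; it measures
steps and model errors in self-concordance estimates. -/
noncomputable def localNorm (f : E → ℝ) (x v : E) : ℝ := √(fderiv ℝ (fderiv ℝ f) x v v)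

/-- Standard self-concordance on the whole space with a nondegenerate Hessian: the class of
functions for which the Newton-type estimates below hold. The bound `|φ'''| ≤ 2 φ''^{3/2}` on
lines is encoded as a bound for the third derivative on the diagonal. -/
structure IsSelfConcordant (f : E → ℝ) : Prop where
  contDiff : ContDiff ℝ 3 f
  hessian_pos : ∀ x v, v ≠ 0 → 0 < fderiv ℝ (fderiv ℝ f) x v v
  abs_third_le : ∀ x v, |fderiv ℝ (fderiv ℝ (fderiv ℝ f)) x v v v| ≤ 2 * localNorm f x v ^ 3

namespace IsSelfConcordant

variable {f : E → ℝ} {x d : E} {t : ℝ}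

lemma of_abs_iteratedDeriv_three_le (hf : ContDiff ℝ 3 f)
    (hpos : ∀ x v, v ≠ 0 → 0 < iteratedDeriv 2 (fun t : ℝ => f (x + t • v)) 0)
    (hthird : ∀ x v, |iteratedDeriv 3 (fun t : ℝ => f (x + t • v)) 0|
      ≤ 2 * iteratedDeriv 2 (fun t : ℝ => f (x + t • v)) 0 ^ ((3 : ℝ) / 2)) :
    IsSelfConcordant f where
  contDiff := hf
  hessian_pos x v hv := by simpa [iteratedDeriv_two_line (hf.of_le (by norm_num))] using hpos x v hv
  abs_third_le x v := by
    rcases eq_or_ne v 0 with rfl | hv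
    · simp [localNorm]
    · have h := hthird x v
      rw [rpow_three_halves (hpos x v hv).le, iteratedDeriv_three_line hf,
        iteratedDeriv_two_line (hf.of_le (by norm_num))] at h
      simpa [localNorm] using h

lemma contDiff_two (hf : IsSelfConcordant f) : ContDiff ℝ 2 f :=
  hf.contDiff.of_le (by norm_num)

lemma localNorm_pos (hf : IsSelfConcordant f) (x : E) {v : E} (hv : v ≠ 0) : 0 < localNorm f x v :=
  Real.sqrt_pos.2 (hf.hessian_pos x v hv)

lemma localNorm_sq (hf : IsSelfConcordant f) (x v : E) :
    localNorm f x v ^ 2 = fderiv ℝ (fderiv ℝ f) x v v := by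
  rcases eq_or_ne v 0 with rfl | hv
  · simp [localNorm]
  · exact Real.sq_sqrt (hf.hessian_pos x v hv).le

lemma abs_third_apply_le (hf : IsSelfConcordant f) (x u v : E) :
    |fderiv ℝ (fderiv ℝ (fderiv ℝ f)) x u v v| ≤ 2 * localNorm f x u * localNorm f x v ^ 2 := by
  rw [hf.localNorm_sq]
  exact abs_trilin_apply_le (fderiv_fderiv_comm hf.contDiff_two x) (hf.hessian_pos x)
    (fderiv_fderiv_fderiv_comm_left hf.contDiff x) (fderiv_fderiv_fderiv_comm_right hf.contDiff x)
    (hf.abs_third_le x) u v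

lemma hasDerivAt_localNorm_line (hf : IsSelfConcordant f) (x d : E) {v : E} (hv : v ≠ 0) (t : ℝ) :
    HasDerivAt (fun s : ℝ => localNorm f (x + s • d) v)
      (fderiv ℝ (fderiv ℝ (fderiv ℝ f)) (x + t • d) d v v / (2 * localNorm f (x + t • d) v)) t :=
  (hasDerivAt_fderiv_fderiv_line hf.contDiff x d v v t).sqrt (hf.hessian_pos _ v hv).ne'

lemma abs_third_apply_div_le (hf : IsSelfConcordant f) (x d : E) {v : E} (hv : v ≠ 0) :
    |fderiv ℝ (fderiv ℝ (fderiv ℝ f)) x d v v / (2 * localNorm f x v)|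
      ≤ localNorm f x d * localNorm f x v := by
  have hpos := hf.localNorm_pos x hv
  rw [abs_div, abs_of_pos (mul_pos two_pos hpos), div_le_iff₀ (mul_pos two_pos hpos)]
  linarith [hf.abs_third_apply_le x d v]

lemma localNorm_direction_le (hf : IsSelfConcordant f) (ht₀ : 0 ≤ t)
    (ht : t * localNorm f x d < 1) :
    localNorm f (x + t • d) d ≤ localNorm f x d / (1 - t * localNorm f x d) := by
  rcases eq_or_ne d 0 with rfl | hd
  · simp [localNorm]
  have h := le_div_one_sub_mul_of_deriv_le_sq (t := t) (hf.hasDerivAt_localNorm_line x d hd)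
    (fun s => hf.localNorm_pos _ hd)
    (fun s => (le_abs_self _).trans ((hf.abs_third_apply_div_le _ d hd).trans_eq (sq _).symm)) ht₀
  simpa using h (by simpa using ht)

lemma abs_third_apply_div_line_le (hf : IsSelfConcordant f) (ht : t * localNorm f x d < 1)
    {v : E} (hv : v ≠ 0) {s : ℝ} (hs : s ∈ Set.Icc 0 t) :
    |fderiv ℝ (fderiv ℝ (fderiv ℝ f)) (x + s • d) d v v / (2 * localNorm f (x + s • d) v)|
      ≤ localNorm f x d / (1 - s * localNorm f x d) * localNorm f (x + s • d) v := by
  have hs' := sub_pos.1 (one_sub_mul_pos (Real.sqrt_nonneg _) ht hs.2)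
  have hpos := hf.localNorm_pos (x + s • d) hv
  grw [hf.abs_third_apply_div_le _ d hv, hf.localNorm_direction_le hs.1 hs']

lemma one_sub_mul_localNorm_le (hf : IsSelfConcordant f) (ht₀ : 0 ≤ t)
    (ht : t * localNorm f x d < 1) (v : E) :
    (1 - t * localNorm f x d) * localNorm f x v ≤ localNorm f (x + t • d) v := by
  rcases eq_or_ne v 0 with rfl | hv
  · simp [localNorm]
  simpa using one_sub_mul_mul_le_of_neg_le_deriv (hf.hasDerivAt_localNorm_line x d hv)
    (fun s hs => (abs_le.1 (hf.abs_third_apply_div_line_le ht hv hs)).1) (Real.sqrt_nonneg _) ht₀ ht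

lemma localNorm_line_le (hf : IsSelfConcordant f) (ht₀ : 0 ≤ t)
    (ht : t * localNorm f x d < 1) (v : E) :
    localNorm f (x + t • d) v ≤ localNorm f x v / (1 - t * localNorm f x d) := by
  rcases eq_or_ne v 0 with rfl | hv
  · simp [localNorm]
  simpa using le_div_one_sub_mul_of_deriv_le (hf.hasDerivAt_localNorm_line x d hv)
    (fun s hs => (abs_le.1 (hf.abs_third_apply_div_line_le ht hv hs)).2) (Real.sqrt_nonneg _) ht₀ ht

lemma abs_third_line_apply_le (hf : IsSelfConcordant f) (ht₀ : 0 ≤ t)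
    (ht : t * localNorm f x d < 1) (w : E) :
    |fderiv ℝ (fderiv ℝ (fderiv ℝ f)) (x + t • d) d d w|
      ≤ 2 * localNorm f x d / (1 - t * localNorm f x d) ^ 3
        * (localNorm f x d * localNorm f x w) := by
  set r := localNorm f x d
  have hp : 0 < 1 - t * r := sub_pos.2 ht
  have hd : localNorm f (x + t • d) d ≤ r / (1 - t * r) := hf.localNorm_direction_le ht₀ ht
  have hw := hf.localNorm_line_le ht₀ ht w
  have hd₀ : 0 ≤ localNorm f (x + t • d) d := Real.sqrt_nonneg _
  have hw₀ : 0 ≤ localNorm f x w := Real.sqrt_nonneg _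
  rw [fderiv_fderiv_fderiv_comm_right hf.contDiff, fderiv_fderiv_fderiv_comm_left hf.contDiff]
  calc _ ≤ 2 * localNorm f (x + t • d) w * localNorm f (x + t • d) d ^ 2 :=
        hf.abs_third_apply_le _ w d
    _ ≤ 2 * (localNorm f x w / (1 - t * r)) * (r / (1 - t * r)) ^ 2 := by gcongr
    _ = 2 * r / (1 - t * r) ^ 3 * (r * localNorm f x w) := by
        field_simp

lemma abs_hessian_line_sub_le (hf : IsSelfConcordant f) (ht₀ : 0 ≤ t)
    (ht : t * localNorm f x d < 1) (w : E) :
    |fderiv ℝ (fderiv ℝ f) (x + t • d) d w - fderiv ℝ (fderiv ℝ f) x d w|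
      ≤ (((1 - t * localNorm f x d) ^ 2)⁻¹ - 1) * (localNorm f x d * localNorm f x w) := by
  set r := localNorm f x d
  have hr₀ : 0 ≤ r := Real.sqrt_nonneg _
  have hmajorant : ∀ s ∈ Set.Icc 0 t,
      HasDerivAt (fun s => (((1 - s * r) ^ 2)⁻¹ - 1) * (r * localNorm f x w))
        (2 * r / (1 - s * r) ^ 3 * (r * localNorm f x w)) s := fun s hs => by
    have hp := one_sub_mul_pos hr₀ ht hs.2
    refine (((((((hasDerivAt_id s).mul_const r).const_sub 1).fun_pow 2).inv
      (pow_pos hp 2).ne').sub_const 1).mul_const _).congr_deriv ?_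
    simp only [id, Nat.cast_ofNat, Nat.add_one_sub_one, pow_one]
    set p := 1 - s * r
    field_simp
  have herror (s : ℝ) := (hasDerivAt_fderiv_fderiv_line hf.contDiff x d d w s).sub_const
    (fderiv ℝ (fderiv ℝ f) x d w)
  refine image_norm_le_of_norm_deriv_right_le_deriv_boundary'
    (fun s _ => (herror s).continuousAt.continuousWithinAt)
    (fun s _ => (herror s).hasDerivWithinAt) (by simp)
    (fun s hs => (hmajorant s hs).continuousAt.continuousWithinAt)
    (fun s hs => (hmajorant s (Set.Ico_subset_Icc_self hs)).hasDerivWithinAt)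
    (fun s hs => hf.abs_third_line_apply_le hs.1 ?_ w) (Set.right_mem_Icc.2 ht₀)
  exact sub_pos.1 (one_sub_mul_pos hr₀ ht hs.2.le)

lemma abs_gradient_sub_linear_le (hf : IsSelfConcordant f) (hd : localNorm f x d < 1) (w : E) :
    |fderiv ℝ f (x + d) w - (fderiv ℝ f x w + fderiv ℝ (fderiv ℝ f) x d w)|
      ≤ localNorm f x d ^ 2 / (1 - localNorm f x d) * localNorm f x w := by
  set r := localNorm f x d
  have hr₀ : 0 ≤ r := Real.sqrt_nonneg _
  have hpos : ∀ s ∈ Set.Icc (0 : ℝ) 1, 0 < 1 - s * r := fun s hs =>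
    one_sub_mul_pos hr₀ (by rwa [one_mul]) hs.2
  have hmajorant : ∀ s ∈ Set.Icc (0 : ℝ) 1,
      HasDerivAt (fun s => (s / (1 - s * r) - s) * (r * localNorm f x w))
        ((((1 - s * r) ^ 2)⁻¹ - 1) * (r * localNorm f x w)) s := fun s hs => by
    have hp := hpos s hs
    refine ((((hasDerivAt_id s).div (((hasDerivAt_id s).mul_const r).const_sub 1) hp.ne').sub
      (hasDerivAt_id s)).mul_const _).congr_deriv ?_
    simp only [id]
    field_simp
    ring
  have herror (s : ℝ) : HasDerivAt (fun s => fderiv ℝ f (x + s • d) w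
        - (fderiv ℝ f x w + s * fderiv ℝ (fderiv ℝ f) x d w))
      (fderiv ℝ (fderiv ℝ f) (x + s • d) d w - fderiv ℝ (fderiv ℝ f) x d w) s := by
    refine ((hasDerivAt_fderiv_line hf.contDiff_two x d w s).sub
      (((hasDerivAt_id s).mul_const _).const_add _)).congr_deriv ?_
    rw [one_mul]
  have hle := image_norm_le_of_norm_deriv_right_le_deriv_boundary'
    (fun s _ => (herror s).continuousAt.continuousWithinAt)
    (fun s _ => (herror s).hasDerivWithinAt) (by simp)
    (fun s hs => (hmajorant s hs).continuousAt.continuousWithinAt)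
    (fun s hs => (hmajorant s (Set.Ico_subset_Icc_self hs)).hasDerivWithinAt)
    (fun s hs => hf.abs_hessian_line_sub_le hs.1
      (sub_pos.1 (hpos s (Set.Ico_subset_Icc_self hs))) w) (Set.right_mem_Icc.2 zero_le_one)
  have hvalue : ((1 - r)⁻¹ - 1) * (r * localNorm f x w) = r ^ 2 / (1 - r) * localNorm f x w := by
    have : 1 - r ≠ 0 := (sub_pos.2 hd).ne'
    field_simp
    ring
  simpa [hvalue] using hle

lemma abs_gradient_add_le (hf : IsSelfConcordant f) (hd : localNorm f x d < 1) {ρ : ℝ}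
    (hρ : ∀ w, |fderiv ℝ f x w + fderiv ℝ (fderiv ℝ f) x d w| ≤ ρ * localNorm f x w) (w : E) :
    |fderiv ℝ f (x + d) w| ≤ (ρ + localNorm f x d ^ 2 / (1 - localNorm f x d))
      / (1 - localNorm f x d) * localNorm f (x + d) w := by
  rcases eq_or_ne w 0 with rfl | hw
  · simp [localNorm]
  set r := localNorm f x d
  set c := ρ + r ^ 2 / (1 - r) with hc
  have hgrad : |fderiv ℝ f (x + d) w| ≤ c * localNorm f x w := by
    have hmodel := abs_le.1 (hf.abs_gradient_sub_linear_le hd w)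
    have hresidual := abs_le.1 (hρ w)
    rw [hc, add_mul, abs_le]
    constructor <;> linarith
  have hc₀ : 0 ≤ c :=
    nonneg_of_mul_nonneg_left ((abs_nonneg _).trans hgrad) (hf.localNorm_pos x hw)
  have hnorm : localNorm f x w ≤ localNorm f (x + d) w / (1 - r) := by
    rw [le_div_iff₀' (sub_pos.2 hd)]
    simpa using hf.one_sub_mul_localNorm_le (t := 1) zero_le_one (by rwa [one_mul]) w
  calc |fderiv ℝ f (x + d) w| ≤ c * localNorm f x w := hgrad
    _ ≤ c * (localNorm f (x + d) w / (1 - r)) := mul_le_mul_of_nonneg_left hnorm hc₀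
    _ = c / (1 - r) * localNorm f (x + d) w := by ring

end IsSelfConcordant

end SelfConcordance

section LoewnerOrder

open scoped ComplexOrder MatrixOrder

variable {ι : Type*} [Fintype ι]

section Inverse

variable {𝕜 : Type*} [RCLike 𝕜] [DecidableEq ι] {H Q : Matrix ι ι 𝕜}

/- Both inequalities say, through the two Schur complements, that the block matrix
`[Q, 1; 1, H⁻¹]` is positive semidefinite. -/
lemma inv_le_inv_of_posDef_of_le (hH : H.PosDef) (h : H ≤ Q) : Q⁻¹ ≤ H⁻¹ := by
  have hQ : Q.PosDef := by simpa using hH.add_posSemidef h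
  let _ : Invertible Q := hQ.isUnit.invertible
  let _ : Invertible H⁻¹ := hH.inv.isUnit.invertible
  have hblock : (fromBlocks Q 1 1ᴴ H⁻¹).PosSemidef := by
    rw [PosDef.fromBlocks₂₂ Q 1 hH.inv]
    simpa [nonsing_inv_nonsing_inv _ hH.det_pos.ne'.isUnit] using Matrix.le_iff.1 h
  simpa [Matrix.le_iff] using (PosDef.fromBlocks₁₁ 1 H⁻¹ hQ).1 hblock

lemma mul_inv_mul_le_of_le (hH : H.PosDef) (h : H ≤ Q) : H * Q⁻¹ * H ≤ H := by
  have hconj := (Matrix.le_iff.1 (inv_le_inv_of_posDef_of_le hH h)).conjTranspose_mul_mul_same H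
  rwa [hH.isHermitian.eq, mul_sub, sub_mul, mul_nonsing_inv _ hH.det_pos.ne'.isUnit,
    one_mul] at hconj

lemma le_mul_inv_mul_of_le (hQ : Q.PosDef) (h : Q ≤ H) : H ≤ H * Q⁻¹ * H := by
  have hH : H.PosDef := by simpa using hQ.add_posSemidef h
  have hconj := (Matrix.le_iff.1 (inv_le_inv_of_posDef_of_le hQ h)).conjTranspose_mul_mul_same H
  rwa [hH.isHermitian.eq, mul_sub, sub_mul, mul_nonsing_inv _ hH.det_pos.ne'.isUnit,
    one_mul] at hconj

end Inverse

variable {A B H Q : Matrix ι ι ℝ}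

lemma dotProduct_mulVec_self_mono (h : A ≤ B) (v : ι → ℝ) :
    v ⬝ᵥ (A *ᵥ v) ≤ v ⬝ᵥ (B *ᵥ v) := by
  simpa [sub_mulVec] using (Matrix.le_iff.1 h).dotProduct_mulVec_nonneg v

lemma dotProduct_mulVec_comm (hA : A.IsHermitian) (v w : ι → ℝ) :
    v ⬝ᵥ (A *ᵥ w) = w ⬝ᵥ (A *ᵥ v) := by
  rw [dotProduct_mulVec, ← mulVec_transpose, ← conjTranspose_eq_transpose_of_trivial, hA.eq,
    dotProduct_comm]

lemma abs_dotProduct_mulVec_le (hA : A.PosSemidef) (v w : ι → ℝ) :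
    |v ⬝ᵥ (A *ᵥ w)| ≤ √(v ⬝ᵥ (A *ᵥ v)) * √(w ⬝ᵥ (A *ᵥ w)) := by
  have hnonneg (z : ι → ℝ) : 0 ≤ z ⬝ᵥ (A *ᵥ z) := by
    simpa using hA.dotProduct_mulVec_nonneg z
  classical
  rw [← Real.sqrt_mul (hnonneg v)]
  refine Real.abs_le_sqrt ?_
  simpa [Matrix.toBilin'_apply'] using LinearMap.BilinForm.apply_sq_le_of_symm (Matrix.toBilin' A)
    (fun z => by simpa [Matrix.toBilin'_apply'] using hnonneg z)
    ⟨fun v w => by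
      simpa [Matrix.toBilin'_apply'] using dotProduct_mulVec_comm hA.isHermitian v w⟩ v w

variable [DecidableEq ι]

lemma sqrt_dotProduct_inv_mulVec_le (hA : A.PosDef) {g : ι → ℝ} {c : ℝ} (hc : 0 ≤ c)
    (h : ∀ w, |g ⬝ᵥ w| ≤ c * √(w ⬝ᵥ (A *ᵥ w))) : √(g ⬝ᵥ (A⁻¹ *ᵥ g)) ≤ c := by
  have hinv : A *ᵥ (A⁻¹ *ᵥ g) = g := by
    rw [mulVec_mulVec, mul_nonsing_inv _ hA.det_pos.ne'.isUnit, one_mulVec]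
  have hnonneg : 0 ≤ g ⬝ᵥ (A⁻¹ *ᵥ g) := by
    simpa using hA.inv.posSemidef.dotProduct_mulVec_nonneg g
  have hdual := h (A⁻¹ *ᵥ g)
  rw [hinv, dotProduct_comm _ g, abs_of_nonneg hnonneg] at hdual
  rcases (Real.sqrt_nonneg (g ⬝ᵥ (A⁻¹ *ᵥ g))).eq_or_lt with hzero | hpos
  · rwa [← hzero]
  · exact le_of_mul_le_mul_right ((Real.mul_self_sqrt hnonneg).trans_le hdual) hpos

lemma dotProduct_mulVec_quasiNewton_step_le (hH : H.PosDef) (hHQ : H ≤ Q) (g : ι → ℝ) :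
    -(Q⁻¹ *ᵥ g) ⬝ᵥ (H *ᵥ -(Q⁻¹ *ᵥ g)) ≤ g ⬝ᵥ (H⁻¹ *ᵥ g) := by
  have hQ : Q.PosDef := by simpa using hH.add_posSemidef hHQ
  calc _ ≤ -(Q⁻¹ *ᵥ g) ⬝ᵥ (Q *ᵥ -(Q⁻¹ *ᵥ g)) := dotProduct_mulVec_self_mono hHQ _
    _ = g ⬝ᵥ (Q⁻¹ *ᵥ g) := by
      rw [mulVec_neg, neg_dotProduct_neg, mulVec_mulVec,
        mul_nonsing_inv _ hQ.det_pos.ne'.isUnit, one_mulVec, dotProduct_comm]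
    _ ≤ g ⬝ᵥ (H⁻¹ *ᵥ g) := dotProduct_mulVec_self_mono (inv_le_inv_of_posDef_of_le hH hHQ) g

lemma sub_mul_inv_mul_le (hQ : Q.PosDef) {ε : ℝ} (hε : 0 < ε) (h : ε • Q ≤ H) :
    H - H * Q⁻¹ * H ≤ (1 - ε) • H := by
  let _ : Invertible ε := invertibleOfNonzero hε.ne'
  have hle : H ≤ ε⁻¹ • (H * Q⁻¹ * H) := by
    simpa [inv_smul _ ε hQ.det_pos.ne'.isUnit] using le_mul_inv_mul_of_le (hQ.smul hε) h
  have hsmul : ε • H ≤ H * Q⁻¹ * H := by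
    simpa [smul_smul, hε.ne'] using smul_le_smul_of_nonneg_left hle hε.le
  rw [sub_smul, one_smul]
  exact sub_le_sub_left hsmul H

lemma abs_quasiNewton_residual_le (hH : H.PosDef) (hHQ : H ≤ Q) {ε : ℝ} (hε : 0 < ε)
    (hε₁ : ε ≤ 1) (hQH : ε • Q ≤ H) (g w : ι → ℝ) :
    |g ⬝ᵥ w + -(Q⁻¹ *ᵥ g) ⬝ᵥ (H *ᵥ w)|
      ≤ (1 - ε) * √(g ⬝ᵥ (H⁻¹ *ᵥ g)) * √(w ⬝ᵥ (H *ᵥ w)) := by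
  have hunit := hH.det_pos.ne'.isUnit
  have hQ : Q.PosDef := by simpa using hH.add_posSemidef hHQ
  have hB : (H - H * Q⁻¹ * H).PosSemidef := Matrix.le_iff.1 (mul_inv_mul_le_of_le hH hHQ)
  have hle (z : ι → ℝ) : √(z ⬝ᵥ ((H - H * Q⁻¹ * H) *ᵥ z)) ≤ √(1 - ε) * √(z ⬝ᵥ (H *ᵥ z)) := by
    rw [← Real.sqrt_mul (sub_nonneg.2 hε₁)]
    refine Real.sqrt_le_sqrt ?_
    simpa [smul_mulVec] using dotProduct_mulVec_self_mono (sub_mul_inv_mul_le hQ hε hQH) z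
  have hresidual : g ⬝ᵥ w + -(Q⁻¹ *ᵥ g) ⬝ᵥ (H *ᵥ w)
      = w ⬝ᵥ ((H - H * Q⁻¹ * H) *ᵥ (H⁻¹ *ᵥ g)) := by
    rw [mulVec_mulVec, sub_mul, mul_assoc _ H, mul_nonsing_inv _ hunit, mul_one, sub_mulVec,
      one_mulVec, ← mulVec_mulVec, dotProduct_sub, neg_dotProduct, dotProduct_comm g,
      dotProduct_mulVec_comm hH.isHermitian w, sub_eq_add_neg]
  have hnorm : (H⁻¹ *ᵥ g) ⬝ᵥ (H *ᵥ (H⁻¹ *ᵥ g)) = g ⬝ᵥ (H⁻¹ *ᵥ g) := by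
    rw [mulVec_mulVec, mul_nonsing_inv _ hunit, one_mulVec, dotProduct_comm]
  calc _ ≤ √(w ⬝ᵥ ((H - H * Q⁻¹ * H) *ᵥ w))
          * √((H⁻¹ *ᵥ g) ⬝ᵥ ((H - H * Q⁻¹ * H) *ᵥ (H⁻¹ *ᵥ g))) := by
        rw [hresidual]
        exact abs_dotProduct_mulVec_le hB w _
    _ ≤ √(1 - ε) * √(w ⬝ᵥ (H *ᵥ w)) * (√(1 - ε) * √((H⁻¹ *ᵥ g) ⬝ᵥ (H *ᵥ (H⁻¹ *ᵥ g)))) := by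
        gcongr <;> exact hle _
    _ = (√(1 - ε) * √(1 - ε)) * √(g ⬝ᵥ (H⁻¹ *ᵥ g)) * √(w ⬝ᵥ (H *ᵥ w)) := by
        rw [hnorm]
        ring
    _ = _ := by rw [Real.mul_self_sqrt (sub_nonneg.2 hε₁)]

lemma eq_transpose_mul_diagonal_mul_of_eigenbasis {u : ι → ι → ℝ}
    (hu : ∀ i j, u i ⬝ᵥ u j = if i = j then (1 : ℝ) else 0) {a : ι → ℝ}
    (ha : ∀ i, A *ᵥ u i = a i • u i) : A = (of u)ᵀ * diagonal a * of u := by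
  have hortho : of u * (of u)ᵀ = 1 := by
    ext i j
    simpa [Matrix.mul_apply, dotProduct, Matrix.one_apply] using hu i j
  have hdiag : A * (of u)ᵀ = (of u)ᵀ * diagonal a := by
    ext j i
    rw [mul_diagonal]
    simpa [Matrix.mul_apply, mulVec, dotProduct, mul_comm] using congrFun (ha i) j
  rw [← hdiag, mul_assoc, mul_eq_one_comm.1 hortho, mul_one]

lemma le_of_eigenvalues_le {u : ι → ι → ℝ}
    (hu : ∀ i j, u i ⬝ᵥ u j = if i = j then (1 : ℝ) else 0) {a b : ι → ℝ}
    (ha : ∀ i, A *ᵥ u i = a i • u i) (hb : ∀ i, B *ᵥ u i = b i • u i) (hab : a ≤ b) : A ≤ B := by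
  rw [Matrix.le_iff, eq_transpose_mul_diagonal_mul_of_eigenbasis hu ha,
    eq_transpose_mul_diagonal_mul_of_eigenbasis hu hb, ← sub_mul, ← mul_sub, diagonal_sub,
    ← conjTranspose_eq_transpose_of_trivial]
  exact (PosSemidef.diagonal (sub_nonneg.2 hab)).conjTranspose_mul_mul_same _

end LoewnerOrder

section TruncatedSpectrum

open scoped MatrixOrder

variable {n N : ℕ} {hN : N < n} {σ : Fin n → ℝ} {u : Fin n → Fin n → ℝ}
  {H Q : Matrix (Fin n) (Fin n) ℝ}

lemma le_truncation (hσ : Antitone σ)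
    (hu : ∀ i j, u i ⬝ᵥ u j = if i = j then (1 : ℝ) else 0) (hH : ∀ i, H *ᵥ u i = σ i • u i)
    (hQ : ∀ i : Fin n, Q *ᵥ u i = (if (i : ℕ) < N then σ i else σ ⟨N, hN⟩) • u i) : H ≤ Q := by
  refine le_of_eigenvalues_le hu hH hQ fun i => ?_
  split_ifs with hi
  · exact le_rfl
  · exact hσ (Fin.le_def.2 (not_lt.1 hi))

lemma smul_truncation_le (hσ : Antitone σ) (hpos : ∀ i, 0 < σ i)
    (hu : ∀ i j, u i ⬝ᵥ u j = if i = j then (1 : ℝ) else 0) (hH : ∀ i, H *ᵥ u i = σ i • u i)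
    (hQ : ∀ i : Fin n, Q *ᵥ u i = (if (i : ℕ) < N then σ i else σ ⟨N, hN⟩) • u i)
    {ε : ℝ} (hε₁ : ε ≤ 1) (hε : ε ≤ σ ⟨n - 1, by omega⟩ / σ ⟨N, hN⟩) : ε • Q ≤ H := by
  refine le_of_eigenvalues_le hu (fun i => by rw [smul_mulVec, hQ, smul_smul]) hH fun i => ?_
  split_ifs
  · exact mul_le_of_le_one_left (hpos i).le hε₁
  · exact ((le_div_iff₀ (hpos _)).1 hε).trans (hσ (Fin.le_def.2 (Nat.le_sub_one_of_lt i.2)))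

end TruncatedSpectrum

section DecrementBound

variable {ε lam r : ℝ}

lemma quadratic_pos_of_lt_root (hε : ε ≤ 1) (hlam : lam < (3 - √(9 - 4 * ε)) / 2) :
    0 < lam ^ 2 - 3 * lam + ε := by
  have hsq := Real.sq_sqrt (show 0 ≤ 9 - 4 * ε by linarith)
  nlinarith [Real.sqrt_nonneg (9 - 4 * ε)]

lemma root_mem_Ioc (hε₀ : 0 < ε) (hε₁ : ε ≤ 1) :
    (3 - √(9 - 4 * ε)) / 2 ∈ Set.Ioc 0 ((3 - √5) / 2) := by
  have hlt : √(9 - 4 * ε) < 3 := (Real.sqrt_lt' three_pos).2 (by linarith)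
  have hle : √5 ≤ √(9 - 4 * ε) := Real.sqrt_le_sqrt (by linarith)
  constructor <;> linarith

lemma lt_one_of_lt_root (hε₁ : ε ≤ 1) (hlam : lam < (3 - √(9 - 4 * ε)) / 2) : lam < 1 := by
  have : 1 ≤ √(9 - 4 * ε) := Real.one_le_sqrt.2 (by linarith)
  linarith

lemma decrement_bound_lt (hε : ε ≤ 1) (hlam₀ : 0 < lam) (hlam : lam < (3 - √(9 - 4 * ε)) / 2)
    (hr₀ : 0 ≤ r) (hr : r ≤ lam) : ((1 - ε) * lam + r ^ 2 / (1 - r)) / (1 - r) < lam := by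
  have hroot := quadratic_pos_of_lt_root hε hlam
  have hpos : 0 < 1 - lam := sub_pos.2 (lt_one_of_lt_root hε hlam)
  have hstep : lam / (1 - lam) < ε - lam := by
    rw [div_lt_iff₀ hpos]
    nlinarith
  rw [div_lt_iff₀ (by linarith)]
  calc (1 - ε) * lam + r ^ 2 / (1 - r) ≤ (1 - ε) * lam + lam ^ 2 / (1 - lam) := by gcongr
    _ = lam * (1 - ε + lam / (1 - lam)) := by ring
    _ < lam * (1 - lam) := mul_lt_mul_of_pos_left (by linarith) hlam₀
    _ ≤ lam * (1 - r) := by gcongr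

end DecrementBound

section CoordinateDerivatives

variable {ι : Type*} [Fintype ι] {f : (ι → ℝ) → ℝ} {x : ι → ℝ}

lemma fderiv_apply_eq_dotProduct {g : ι → ℝ} (hf : DifferentiableAt ℝ f x)
    (hg : ∀ v, deriv (fun t : ℝ => f (x + t • v)) 0 = g ⬝ᵥ v) (v : ι → ℝ) :
    fderiv ℝ f x v = g ⬝ᵥ v := by
  simpa [← hg] using (hasDerivAt_line (d := v) (t := 0) (by simpa using hf)).deriv.symm

lemma fderiv_fderiv_apply_eq_dotProduct_mulVec {A : Matrix ι ι ℝ} (hf : ContDiff ℝ 2 f)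
    (hA : A.IsHermitian)
    (hdiag : ∀ v, iteratedDeriv 2 (fun t : ℝ => f (x + t • v)) 0 = v ⬝ᵥ (A *ᵥ v)) (v w : ι → ℝ) :
    fderiv ℝ (fderiv ℝ f) x v w = v ⬝ᵥ (A *ᵥ w) := by
  have hquad (z : ι → ℝ) : fderiv ℝ (fderiv ℝ f) x z z = z ⬝ᵥ (A *ᵥ z) := by
    simp [← hdiag, iteratedDeriv_two_line hf]
  have hsum := hquad (v + w)
  simp only [map_add, _root_.add_apply, mulVec_add, dotProduct_add, add_dotProduct, hquad,
    fderiv_fderiv_comm hf x w v, dotProduct_mulVec_comm hA w v] at hsum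
  linarith

end CoordinateDerivatives

open scoped MatrixOrder in
theorem stmt14_general {ι : Type*} [Fintype ι] [DecidableEq ι]
    (f : (ι → ℝ) → ℝ) (grad : (ι → ℝ) → ι → ℝ) (hess : (ι → ℝ) → Matrix ι ι ℝ)
    (hf : ContDiff ℝ 3 f)
    (hgrad : ∀ x u : ι → ℝ, deriv (fun t : ℝ => f (x + t • u)) 0 = grad x ⬝ᵥ u)
    (hhessq : ∀ x u : ι → ℝ,
      iteratedDeriv 2 (fun t : ℝ => f (x + t • u)) 0 = u ⬝ᵥ (hess x *ᵥ u))
    (hhpd : ∀ x, (hess x).PosDef)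
    (hsc : ∀ x u : ι → ℝ, |iteratedDeriv 3 (fun s : ℝ => f (x + s • u)) 0|
        ≤ 2 * iteratedDeriv 2 (fun s : ℝ => f (x + s • u)) 0 ^ ((3 : ℝ) / 2))
    (x : ι → ℝ) (Q : Matrix ι ι ℝ) (hHQ : hess x ≤ Q)
    (ε : ℝ) (hε0 : 0 < ε) (hε1 : ε ≤ 1) (hQH : ε • Q ≤ hess x)
    (η : ℝ) (hη : η = (3 - √(9 - 4 * ε)) / 2)
    (lam : ℝ) (hlam : lam = √(grad x ⬝ᵥ ((hess x)⁻¹ *ᵥ grad x))) :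
    0 < η ∧ η ≤ (3 - √5) / 2 ∧
    (0 < lam → lam < η →
      √(grad (x + -(Q⁻¹ *ᵥ grad x)) ⬝ᵥ
        ((hess (x + -(Q⁻¹ *ᵥ grad x)))⁻¹ *ᵥ grad (x + -(Q⁻¹ *ᵥ grad x)))) < lam) := by
  have hsc' : IsSelfConcordant f := .of_abs_iteratedDeriv_three_le hf
    (fun y v hv => by simpa [hhessq] using (hhpd y).dotProduct_mulVec_pos hv) hsc
  have hD (y v) : fderiv ℝ f y v = grad y ⬝ᵥ v :=
    fderiv_apply_eq_dotProduct (hf.differentiable three_ne_zero y) (hgrad y) v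
  have hD₂ (y v w) : fderiv ℝ (fderiv ℝ f) y v w = v ⬝ᵥ (hess y *ᵥ w) :=
    fderiv_fderiv_apply_eq_dotProduct_mulVec hsc'.contDiff_two (hhpd y).isHermitian (hhessq y) v w
  have hnorm (y v) : localNorm f y v = √(v ⬝ᵥ (hess y *ᵥ v)) := by rw [localNorm, hD₂]
  refine ⟨hη ▸ (root_mem_Ioc hε0 hε1).1, hη ▸ (root_mem_Ioc hε0 hε1).2, fun hlam₀ hlamη => ?_⟩
  rw [hη] at hlamη
  set d := -(Q⁻¹ *ᵥ grad x)
  have hstep : localNorm f x d ≤ lam := by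
    rw [hnorm, hlam]
    exact Real.sqrt_le_sqrt (dotProduct_mulVec_quasiNewton_step_le (hhpd x) hHQ (grad x))
  have hstep₁ : localNorm f x d < 1 := hstep.trans_lt (lt_one_of_lt_root hε1 hlamη)
  have hresidual (w) : |fderiv ℝ f x w + fderiv ℝ (fderiv ℝ f) x d w|
      ≤ (1 - ε) * lam * localNorm f x w := by
    rw [hD, hD₂, hnorm, hlam]
    exact abs_quasiNewton_residual_le (hhpd x) hHQ hε0 hε1 hQH (grad x) w
  have hnext (w) := hsc'.abs_gradient_add_le hstep₁ hresidual w
  simp only [hD, hnorm (x + d)] at hnext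
  refine (sqrt_dotProduct_inv_mulVec_le (hhpd (x + d)) ?_ hnext).trans_lt
    (decrement_bound_lt hε1 hlam₀ hlamη (Real.sqrt_nonneg _) hstep)
  have := sub_nonneg.2 hε1
  have := sub_pos.2 hstep₁
  positivity

/-- Let `f` be strictly convex standard self-concordant, `x`
a point with eigenvalues `σ_1 ≥ … ≥ σ_n > 0` of `∇²f(x)`, and let `ε ∈ (0, 1]`
satisfy `ε ≤ σ_n/σ_{N+1}`.  Set `η := (3 − √(9 − 4ε))/2`.  Then
`η ∈ (0, (3 − √5)/2]`, and if `0 < λ(x) < η` then the unit step with the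
truncated direction `d̂ = −Q⁻¹ ∇f(x)` yields `λ(x + d̂) < λ(x)`. -/
theorem stmt14 {n N : ℕ} (hN : 1 ≤ N) (hNn : N < n)
    (f : (Fin n → ℝ) → ℝ) (grad : (Fin n → ℝ) → Fin n → ℝ)
    (hess : (Fin n → ℝ) → Matrix (Fin n) (Fin n) ℝ)
    (hf : ContDiff ℝ 3 f)
    (hconv : StrictConvexOn ℝ Set.univ f)
    (hgrad : ∀ x u : Fin n → ℝ, deriv (fun t : ℝ => f (x + t • u)) 0 = grad x ⬝ᵥ u)
    (hhessq : ∀ x u : Fin n → ℝ,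
      iteratedDeriv 2 (fun t : ℝ => f (x + t • u)) 0 = u ⬝ᵥ (hess x *ᵥ u))
    (hhsymm : ∀ x, (hess x).IsSymm)
    (hhpd : ∀ x, (hess x).PosDef)
    (hsc : ∀ x u : Fin n → ℝ, ∀ t : ℝ,
      |iteratedDeriv 3 (fun s : ℝ => f (x + s • u)) t|
        ≤ 2 * iteratedDeriv 2 (fun s : ℝ => f (x + s • u)) t ^ ((3 : ℝ) / 2))
    (hclosed : ∀ c : ℝ, IsClosed {x | f x ≤ c})
    (hbdd : BddBelow (Set.range f))
    (x : Fin n → ℝ)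
    (σ : Fin n → ℝ) (u : Fin n → Fin n → ℝ)
    (hσpos : ∀ i, 0 < σ i)
    (hσmono : ∀ i j : Fin n, i ≤ j → σ j ≤ σ i)
    (hortho : ∀ i j : Fin n, u i ⬝ᵥ u j = if i = j then (1 : ℝ) else 0)
    (heig : ∀ i, hess x *ᵥ u i = σ i • u i)
    (Q : Matrix (Fin n) (Fin n) ℝ) (hQsymm : Q.IsSymm)
    (hQeig : ∀ i : Fin n, Q *ᵥ u i = (if (i : ℕ) < N then σ i else σ ⟨N, hNn⟩) • u i)
    (ε : ℝ) (hε0 : 0 < ε) (hε1 : ε ≤ 1)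
    (hε : ε ≤ σ ⟨n - 1, by omega⟩ / σ ⟨N, hNn⟩)
    (η : ℝ) (hη : η = (3 - Real.sqrt (9 - 4 * ε)) / 2)
    (lam : ℝ) (hlam : lam = Real.sqrt (grad x ⬝ᵥ ((hess x)⁻¹ *ᵥ grad x))) :
    0 < η ∧ η ≤ (3 - Real.sqrt 5) / 2 ∧
    (0 < lam → lam < η →
      Real.sqrt (grad (x + -(Q⁻¹ *ᵥ grad x)) ⬝ᵥ
        ((hess (x + -(Q⁻¹ *ᵥ grad x)))⁻¹ *ᵥ grad (x + -(Q⁻¹ *ᵥ grad x)))) < lam) :=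
  have hσ : Antitone σ := fun i j hij => hσmono i j hij
  stmt14_general f grad hess hf hgrad hhessq hhpd (fun y v => hsc y v 0) x Q
    (le_truncation hσ hortho heig hQeig) ε hε0 hε1
    (smul_truncation_le hσ hσpos hortho heig hQeig hε1 hε) η hη lam hlam
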